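/- Let k be a field of characteristic p > 2 with [k : k^p] < ∞ and let f = x²y² + y²z² + z²x² ∈ R = k[x, y, z]. Then the test ideal τ(f^{1−1/p}) equals the maximal ideal m = (x, y, z); in particular R/fR has an isolated non-F-pure point at m. -/

import Mathlib

/-!
The exponents of a monomial of `f ^ (q - 1)`, where `q = p ^ e`, add up to `4 * (q - 1)`, so one of
the three is at least `q`; hence `f ^ (q - 1) ∈ m^{[e]}` and `τ ⊆ m`.

Conversely, a `p⁻ᵉ`-linear map `φ` sends `a^{[e]}` into `a` for every ideal `a`, so
`φ (f ^ (q - 1)) ∈ τ`. Such maps arise by extracting the monomials with exponents `≡ s` modulo `q`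
and applying a splitting of the Frobenius of `k` to their coefficients. With `q = 2 * h + 1` and
`s = (q - 2, q - 1, q - 1)` the only monomial of `f ^ (q - 1)` that survives is
`x ^ (2 * (q - 1)) * y ^ (q - 1) * z ^ (q - 1)`, so that `φ (f ^ (q - 1))` is `x` times
`(q - 1).choose h`, which is a unit modulo `p`. By symmetry `m ⊆ τ`.
-/

open MvPolynomial

noncomputable section

/-- `I^{[e]}`-style bracket power: the ideal generated by `q`-th powers of elements of `I`. -/
def bracketPow {A : Type*} [CommRing A] (I : Ideal A) (q : ℕ) : Ideal A :=
  Ideal.span ((fun u => u ^ q) '' (I : Set A))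

/-- The test ideal `τ(f^{1 - 1/p^e})`: the smallest ideal `a` with `f^{p^e - 1} ∈ a^{[e]}`. -/
def testIdeal {A : Type*} [CommRing A] (p : ℕ) (f : A) (e : ℕ) : Ideal A :=
  sInf {a : Ideal A | f ^ (p ^ e - 1) ∈ bracketPow a (p ^ e)}

/-- The homogeneous maximal ideal `m = (x_0, ..., x_n)`. -/
def mxI (k : Type*) [Field k] (n : ℕ) : Ideal (MvPolynomial (Fin (n + 1)) k) :=
  Ideal.span (Set.range (X : Fin (n + 1) → MvPolynomial (Fin (n + 1)) k))

/-- The set of degrees of homogeneous elements of `(m^{[e]} : τ) \ m^{[e]}`. -/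
def MeSet (k : Type*) [Field k] (n p : ℕ) (τ : Ideal (MvPolynomial (Fin (n + 1)) k))
    (e : ℕ) : Set ℕ :=
  {d : ℕ | ∃ g : MvPolynomial (Fin (n + 1)) k,
    g ∈ (bracketPow (mxI k n) (p ^ e)).colon τ ∧
    g ∉ bracketPow (mxI k n) (p ^ e) ∧ g.IsHomogeneous d}

/-- `M_e`: the minimal degree of a homogeneous element of `(m^{[e]} : τ) \ m^{[e]}`. -/
def Me (k : Type*) [Field k] (n p : ℕ) (τ : Ideal (MvPolynomial (Fin (n + 1)) k))
    (e : ℕ) : ℕ :=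
  sInf (MeSet k n p τ e)

/-- `e_0`: the least `e` with `τ ⊄ m^{[e]}`. -/
def e0 (k : Type*) [Field k] (n p : ℕ) (τ : Ideal (MvPolynomial (Fin (n + 1)) k)) : ℕ :=
  sInf {e : ℕ | ¬ τ ≤ bracketPow (mxI k n) (p ^ e)}

section CartierLinear

variable {A : Type*} [CommRing A]

lemma testIdeal_le {p e : ℕ} {f : A} {a : Ideal A}
    (ha : f ^ (p ^ e - 1) ∈ bracketPow a (p ^ e)) : testIdeal p f e ≤ a :=
  sInf_le ha

/-- Additive maps that are linear over the inverse of the `q`-th power map; for `q = p ^ e` in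
characteristic `p` these are the `p⁻ᵉ`-linear (Cartier) maps. -/
def IsCartierLinear {R : Type*} [CommSemiring R] (q : ℕ) (φ : R →+ R) : Prop :=
  ∀ r g, φ (r ^ q * g) = r * φ g

namespace IsCartierLinear

lemma map_mem_of_mem_bracketPow {q : ℕ} {φ : A →+ A} (hφ : IsCartierLinear q φ)
    {a : Ideal A} {g : A} (hg : g ∈ bracketPow a q) : φ g ∈ a := by
  suffices ∀ c, φ (g * c) ∈ a by simpa using this 1
  induction hg using Submodule.span_induction with
  | mem _ hu =>
    obtain ⟨u, hu, rfl⟩ := hu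
    exact fun c => hφ u c ▸ a.mul_mem_right _ hu
  | zero => simp
  | add x y _ _ hx hy => exact fun c => by simpa only [add_mul, map_add] using add_mem (hx c) (hy c)
  | smul d x _ hx =>
    exact fun c => by simpa only [smul_eq_mul, mul_left_comm, mul_assoc] using hx (d * c)

lemma map_pow_mem_testIdeal {p e : ℕ} {φ : A →+ A} (hφ : IsCartierLinear (p ^ e) φ) (f : A) :
    φ (f ^ (p ^ e - 1)) ∈ testIdeal p f e :=
  Submodule.mem_sInf.2 fun _ ha => hφ.map_mem_of_mem_bracketPow ha

end IsCartierLinear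

lemma exists_isCartierLinear_map_one (k : Type*) [Field k] (p e : ℕ) [ExpChar k p] :
    ∃ σ : k →+ k, IsCartierLinear (p ^ e) σ ∧ σ 1 = 1 := by
  let F := iterateFrobenius k p e
  let E : k ≃+* F.fieldRange := F.rangeRestrictFieldEquiv
  obtain ⟨L, hL⟩ := (Algebra.linearMap F.fieldRange k).exists_leftInverse_of_injective
    (LinearMap.ker_eq_bot.2 (algebraMap F.fieldRange k).injective)
  refine ⟨(E.symm : F.fieldRange →+ k).comp L.toAddMonoidHom, fun a b => ?_, ?_⟩
  · -- `E a • b` unfolds to `a ^ p ^ e * b`.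
    calc E.symm (L (E a • b)) = E.symm (E a * L b) := by rw [map_smul, smul_eq_mul]
      _ = a * E.symm (L b) := by rw [map_mul, E.symm_apply_apply]
  · have hL1 : L 1 = 1 := by simpa using LinearMap.congr_fun hL 1
    calc E.symm (L 1) = 1 := by rw [hL1, map_one]

end CartierLinear

section CartierMap

variable {ι R : Type*} [CommSemiring R] {q : ℕ}

lemma smul_add_injective (hq : q ≠ 0) (s : ι →₀ ℕ) :
    Function.Injective fun m : ι →₀ ℕ => q • m + s :=
  (add_left_injective s).comp (smul_right_injective _ hq)

lemma smul_le_smul_add_iff {s : ι →₀ ℕ} (hs : ∀ i, s i < q) {t m : ι →₀ ℕ} :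
    q • t ≤ q • m + s ↔ t ≤ m := by
  refine forall_congr' fun i => ?_
  have hq : 0 < q := Nat.zero_lt_of_lt (hs i)
  calc q * t i ≤ q * m i + s i ↔ t i ≤ (q * m i + s i) / q := by
        rw [Nat.le_div_iff_mul_le hq, mul_comm]
    _ ↔ t i ≤ m i := by rw [Nat.mul_add_div hq, Nat.div_eq_of_lt (hs i), add_zero]

/-- The additive map with `x ^ (q • m + s) ↦ x ^ m`, which kills all other monomials and acts by
`σ` on coefficients. For `q = p ^ e`, a `p⁻ᵉ`-linear `σ` and `s < q`, it is the `p⁻ᵉ`-linear map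
dual to the element `x ^ s` of the monomial basis of `R[x]` over `R[x ^ q]`. -/
def cartierMap (q : ℕ) [NeZero q] (σ : R →+ R) (s : ι →₀ ℕ) :
    MvPolynomial ι R →+ MvPolynomial ι R where
  toFun g := AddMonoidAlgebra.map σ <|
    AddMonoidAlgebra.comapDomain _ (smul_add_injective (NeZero.ne q) s) g
  map_zero' := by simp
  map_add' _ _ := by simp [AddMonoidAlgebra.map_add]

lemma coeff_cartierMap [NeZero q] (σ : R →+ R) (s m : ι →₀ ℕ) (g : MvPolynomial ι R) :
    coeff m (cartierMap q σ s g) = σ (coeff (q • m + s) g) :=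
  rfl

lemma cartierMap_monomial_smul_add [NeZero q] (σ : R →+ R) (s m : ι →₀ ℕ) (c : R) :
    cartierMap q σ s (monomial (q • m + s) c) = monomial m (σ c) := by
  classical
  ext m'
  simp only [coeff_cartierMap, coeff_monomial, (smul_add_injective (NeZero.ne q) s).eq_iff,
    apply_ite σ, map_zero]

lemma cartierMap_monomial_eq_zero [NeZero q] (σ : R →+ R) {s d : ι →₀ ℕ}
    (hd : ∀ m, d ≠ q • m + s) (c : R) : cartierMap q σ s (monomial d c) = 0 := by
  classical
  ext m
  simp only [coeff_cartierMap, coeff_monomial, hd m, if_false, map_zero, coeff_zero]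

lemma isCartierLinear_cartierMap {p e : ℕ} [Fact p.Prime] [CharP R p] {σ : R →+ R}
    (hσ : IsCartierLinear (p ^ e) σ) {s : ι →₀ ℕ} (hs : ∀ i, s i < p ^ e) :
    IsCartierLinear (p ^ e) (cartierMap (p ^ e) σ s) := by
  classical
  intro r g
  induction r using MvPolynomial.induction_on' with
  | add r r' ih ih' => rw [add_pow_char_pow, add_mul, map_add, ih, ih', add_mul]
  | monomial t c =>
    ext m
    simp only [coeff_cartierMap, monomial_pow, coeff_monomial_mul', smul_le_smul_add_iff hs]
    split_ifs with htm
    · obtain ⟨d, rfl⟩ := exists_add_of_le htm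
      rw [hσ, smul_add, add_assoc, add_tsub_cancel_left, add_tsub_cancel_left]
    · exact map_zero σ

end CartierMap

section HomogeneousMaximalIdeal

variable {k : Type*} [Field k] {n : ℕ}

lemma mxI_eq_ker_constantCoeff :
    mxI k n = RingHom.ker (constantCoeff : MvPolynomial (Fin (n + 1)) k →+* k) := by
  ext g
  rw [RingHom.mem_ker, constantCoeff_eq, ← pow_one (mxI k n)]
  refine (mem_pow_idealOfVars_iff' 1 g).trans ?_
  simp only [Nat.lt_one_iff, Finsupp.degree_eq_zero_iff, forall_eq]

lemma isPrime_mxI : (mxI k n).IsPrime :=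
  mxI_eq_ker_constantCoeff (k := k) ▸ RingHom.ker_isPrime _

lemma monomial_mem_bracketPow_mxI {q : ℕ} {d : Fin (n + 1) →₀ ℕ} {i : Fin (n + 1)} (hi : q ≤ d i)
    (c : k) : monomial d c ∈ bracketPow (mxI k n) q := by
  have hX : (X i : MvPolynomial (Fin (n + 1)) k) ^ q ∈ bracketPow (mxI k n) q :=
    Ideal.subset_span ⟨X i, Ideal.subset_span ⟨i, rfl⟩, rfl⟩
  refine Ideal.mem_of_dvd _ ?_ hX
  rw [X_pow_eq_monomial, monomial_dvd_monomial]
  exact ⟨.inr (Finsupp.single_le_iff.2 hi), one_dvd c⟩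

end HomogeneousMaximalIdeal

lemma not_dvd_choose_prime_pow_sub_one {p : ℕ} (hp : p.Prime) {e m : ℕ} (hm : m < p ^ e) :
    ¬ p ∣ (p ^ e - 1).choose m := by
  induction m with
  | zero => simpa using hp.ne_one
  | succ m ih =>
    have hdvd : p ∣ (p ^ e - 1).choose m + (p ^ e - 1).choose (m + 1) := by
      rw [← Nat.choose_succ_succ, Nat.succ_eq_add_one, Nat.sub_add_cancel (by omega)]
      exact hp.dvd_choose_pow m.succ_ne_zero hm.ne
    exact fun h => ih (by omega) ((Nat.dvd_add_left h).1 hdvd)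

lemma sum_prod_erase_pow {ι R : Type*} [Fintype ι] [DecidableEq ι] [CommSemiring R] (y : ι → R)
    (N : ℕ) :
    (∑ i, ∏ j ∈ Finset.univ.erase i, y j) ^ N =
      ∑ w ∈ Finset.univ.piAntidiag N, Nat.multinomial Finset.univ w * ∏ j, y j ^ (N - w j) := by
  rw [Finset.sum_pow_eq_sum_piAntidiag]
  refine Finset.sum_congr rfl fun w hw => congrArg _ ?_
  have hsum (j : ι) : ∑ i ∈ Finset.univ.erase j, w i = N - w j := by
    rw [← (Finset.mem_piAntidiag.1 hw).1, ← Finset.add_sum_erase _ w (Finset.mem_univ j),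
      Nat.add_sub_cancel_left]
  calc ∏ i, (∏ j ∈ Finset.univ.erase i, y j) ^ w i
      = ∏ i, ∏ j ∈ Finset.univ.erase i, y j ^ w i := by simp only [Finset.prod_pow]
    _ = ∏ j, ∏ i ∈ Finset.univ.erase j, y j ^ w i :=
        Finset.prod_comm' (by simp [eq_comm])
    _ = ∏ j, y j ^ (N - w j) := by simp only [Finset.prod_pow_eq_pow_sum, hsum]

section SymmetricQuartic

/-- The quartic `x²y² + y²z² + z²x²`, as the sum over the variables of the product of the squares of
the other two. -/
def symmQuartic (R : Type*) [CommSemiring R] : MvPolynomial (Fin 3) R :=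
  ∑ i, ∏ j ∈ Finset.univ.erase i, X j ^ 2

variable {R : Type*} [CommSemiring R]

lemma symmQuartic_eq :
    symmQuartic R = X 0 ^ 2 * X 1 ^ 2 + X 1 ^ 2 * X 2 ^ 2 + X 2 ^ 2 * X 0 ^ 2 := by
  have h0 : (Finset.univ : Finset (Fin 3)).erase 0 = {1, 2} := by decide
  have h1 : (Finset.univ : Finset (Fin 3)).erase 1 = {2, 0} := by decide
  have h2 : (Finset.univ : Finset (Fin 3)).erase 2 = {0, 1} := by decide
  rw [symmQuartic, Fin.sum_univ_three, h0, h1, h2, Finset.prod_pair (by decide),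
    Finset.prod_pair (by decide), Finset.prod_pair (by decide)]
  ring

/-- The exponent vector of the monomial `∏ i, (∏ j ∈ univ.erase i, X j ^ 2) ^ w i` when the entries
of `w` add up to `N`. -/
def quarticExponent (N : ℕ) (w : Fin 3 → ℕ) : Fin 3 →₀ ℕ :=
  Finsupp.equivFunOnFinite.symm fun j => 2 * (N - w j)

lemma quarticExponent_apply (N : ℕ) (w : Fin 3 → ℕ) (j : Fin 3) :
    quarticExponent N w j = 2 * (N - w j) :=
  rfl

lemma symmQuartic_pow (N : ℕ) :
    symmQuartic R ^ N = ∑ w ∈ Finset.univ.piAntidiag N,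
      monomial (quarticExponent N w) (Nat.multinomial Finset.univ w : R) := by
  rw [symmQuartic, sum_prod_erase_pow]
  refine Finset.sum_congr rfl fun w _ => ?_
  rw [monomial_eq, Finsupp.prod_fintype _ _ (by simp), map_natCast]
  simp only [quarticExponent_apply, pow_mul]

lemma exists_lt_quarticExponent {N : ℕ} (hN : N ≠ 0) {w : Fin 3 → ℕ} (hw : ∑ i, w i = N) :
    ∃ i, N < quarticExponent N w i := by
  by_contra! hle
  have h0 : 2 * (N - w 0) ≤ N := hle 0
  have h1 : 2 * (N - w 1) ≤ N := hle 1
  have h2 : 2 * (N - w 2) ≤ N := hle 2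
  rw [Fin.sum_univ_three] at hw
  omega

lemma symmQuartic_pow_mem_bracketPow_mxI {k : Type*} [Field k] {N : ℕ} (hN : N ≠ 0) :
    symmQuartic k ^ N ∈ bracketPow (mxI k 2) (N + 1) := by
  rw [symmQuartic_pow]
  refine sum_mem fun w hw => ?_
  obtain ⟨i, hi⟩ := exists_lt_quarticExponent hN (Finset.mem_piAntidiag.1 hw).1
  exact monomial_mem_bracketPow_mxI (Nat.succ_le_of_lt hi) _

/-- The exponent vector with entry `q - 2` at `t` and entries `q - 1` elsewhere, for
`q = 2 * h + 1` with `h ≠ 0`. -/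
def residueExponent (h : ℕ) (t : Fin 3) : Fin 3 →₀ ℕ :=
  Finsupp.equivFunOnFinite.symm fun j => if j = t then 2 * h - 1 else 2 * h

lemma residueExponent_apply (h : ℕ) (t j : Fin 3) :
    residueExponent h t j = if j = t then 2 * h - 1 else 2 * h :=
  rfl

lemma residueExponent_lt (h : ℕ) (t j : Fin 3) : residueExponent h t j < 2 * h + 1 := by
  rw [residueExponent_apply]
  split_ifs <;> omega

/-- The multi-index of the only term of `symmQuartic R ^ (2 * h)` whose exponents are congruent to
`residueExponent h t` modulo `2 * h + 1`. -/
def survivingIndex (h : ℕ) (t : Fin 3) : Fin 3 → ℕ :=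
  fun j => if j = t then 0 else h

lemma sum_survivingIndex (h : ℕ) (t : Fin 3) : ∑ i, survivingIndex h t i = 2 * h := by
  simp [survivingIndex, Finset.sum_ite, Finset.filter_ne', Finset.card_erase_of_mem]

lemma multinomial_survivingIndex (h : ℕ) (t : Fin 3) :
    Nat.multinomial Finset.univ (survivingIndex h t) = (2 * h).choose h := by
  have hprod : ∏ i, (survivingIndex h t i).factorial = h.factorial * h.factorial := by
    fin_cases t <;> simp [survivingIndex, Fin.prod_univ_three]
  rw [Nat.multinomial, sum_survivingIndex, hprod, Nat.choose_eq_factorial_div_factorial (by omega),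
    two_mul, Nat.add_sub_cancel]

lemma quarticExponent_survivingIndex {h : ℕ} (hh : h ≠ 0) (t : Fin 3) :
    quarticExponent (2 * h) (survivingIndex h t) =
      (2 * h + 1) • Finsupp.single t 1 + residueExponent h t := by
  ext j
  simp only [quarticExponent_apply, survivingIndex, Finsupp.add_apply, Finsupp.smul_apply,
    Finsupp.single_apply, smul_eq_mul, residueExponent_apply, eq_comm (a := t)]
  split_ifs <;> omega

lemma eq_survivingIndex_of_quarticExponent_eq {h : ℕ} {t : Fin 3} {w : Fin 3 → ℕ} {m : Fin 3 →₀ ℕ}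
    (hw : ∑ i, w i = 2 * h)
    (hm : quarticExponent (2 * h) w = (2 * h + 1) • m + residueExponent h t) :
    w = survivingIndex h t := by
  have hwj {j : Fin 3} (hjt : j ≠ t) : w j = h := by
    have hj : 2 * (2 * h - w j) = (2 * h + 1) * m j + 2 * h := by
      simpa [quarticExponent_apply, residueExponent_apply, hjt] using DFunLike.congr_fun hm j
    have hmj : m j = 0 := Nat.eq_zero_of_not_pos fun hpos => by
      have := Nat.le_mul_of_pos_right (2 * h + 1) hpos
      omega
    have hle : w j ≤ 2 * h :=
      hw ▸ Finset.single_le_sum_of_canonicallyOrdered (Finset.mem_univ j)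
    rw [hmj] at hj
    omega
  have hwt : w t = 0 := by
    have herase : ∑ j ∈ Finset.univ.erase t, w j = 2 * h := by
      rw [Finset.sum_congr rfl fun j hj => hwj (Finset.ne_of_mem_erase hj)]
      simp [Finset.card_erase_of_mem]
    have := Finset.add_sum_erase Finset.univ w (Finset.mem_univ t)
    omega
  ext j
  by_cases hjt : j = t
  · simp [survivingIndex, hjt, hwt]
  · simp [survivingIndex, hjt, hwj hjt]

lemma cartierMap_symmQuartic_pow {q h : ℕ} [NeZero q] (hq : q = 2 * h + 1) (hh : h ≠ 0)
    (σ : R →+ R) (t : Fin 3) :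
    cartierMap q σ (residueExponent h t) (symmQuartic R ^ (2 * h)) =
      monomial (Finsupp.single t 1) (σ ((2 * h).choose h)) := by
  subst hq
  rw [symmQuartic_pow, map_sum, Finset.sum_eq_single (survivingIndex h t),
    quarticExponent_survivingIndex hh, cartierMap_monomial_smul_add, multinomial_survivingIndex]
  · intro w hw hne
    refine cartierMap_monomial_eq_zero σ (fun _ hm => hne ?_) _
    exact eq_survivingIndex_of_quarticExponent_eq (Finset.mem_piAntidiag.1 hw).1 hm
  · exact fun hnot => absurd (Finset.mem_piAntidiag.2
      ⟨sum_survivingIndex h t, fun i _ => Finset.mem_univ i⟩) hnot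

end SymmetricQuartic

section TestIdeal

variable {k : Type*} [Field k] {p e : ℕ} [Fact p.Prime] [CharP k p]

lemma X_mem_testIdeal_symmQuartic (hp : 2 < p) (he : e ≠ 0) (t : Fin 3) :
    X t ∈ testIdeal p (symmQuartic k) e := by
  have hpr : p.Prime := Fact.out
  obtain ⟨h, hq⟩ : Odd (p ^ e) := (hpr.odd_of_ne_two hp.ne').pow
  have hh : h ≠ 0 := by
    have := Nat.one_lt_pow he hpr.one_lt
    omega
  have hqh : p ^ e - 1 = 2 * h := by omega
  obtain ⟨σ, hσ, hσ1⟩ := exists_isCartierLinear_map_one k p e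
  have hmem := (isCartierLinear_cartierMap hσ fun j => hq ▸ residueExponent_lt h t j)
    |>.map_pow_mem_testIdeal (symmQuartic k)
  have hc : ((2 * h).choose h : k) ≠ 0 := by
    rw [Ne, CharP.cast_eq_zero_iff k p, ← hqh]
    exact not_dvd_choose_prime_pow_sub_one hpr (by omega)
  have hσc : σ ((2 * h).choose h) = (2 * h).choose h := by
    rw [← nsmul_one, map_nsmul, hσ1]
  rw [hqh, cartierMap_symmQuartic_pow hq hh, hσc] at hmem
  refine Ideal.mem_of_dvd _ ?_ hmem
  rw [X, monomial_dvd_monomial]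
  exact ⟨.inr le_rfl, hc.isUnit.dvd⟩

lemma testIdeal_symmQuartic (hp : 2 < p) (he : e ≠ 0) :
    testIdeal p (symmQuartic k) e = mxI k 2 := by
  apply le_antisymm
  · have hq : 1 < p ^ e := Nat.one_lt_pow he (by omega)
    have hmem := symmQuartic_pow_mem_bracketPow_mxI (k := k) (Nat.sub_ne_zero_of_lt hq)
    rw [Nat.sub_add_cancel hq.le] at hmem
    exact testIdeal_le hmem
  · rw [mxI, Ideal.span_le]
    rintro _ ⟨t, rfl⟩
    exact X_mem_testIdeal_symmQuartic hp he t

end TestIdeal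

theorem testIdeal_example_eq_maxIdeal_general {k : Type*} [Field k] {p e : ℕ}
    [Fact p.Prime] [CharP k p] (hp : 2 < p) (he : e ≠ 0) :
    testIdeal p
        ((X 0) ^ 2 * (X 1) ^ 2 + (X 1) ^ 2 * (X 2) ^ 2 + (X 2) ^ 2 * (X 0) ^ 2 :
          MvPolynomial (Fin (2 + 1)) k) e = mxI k 2 ∧
      (testIdeal p
          ((X 0) ^ 2 * (X 1) ^ 2 + (X 1) ^ 2 * (X 2) ^ 2 + (X 2) ^ 2 * (X 0) ^ 2 :
            MvPolynomial (Fin (2 + 1)) k) e).radical = mxI k 2 := by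
  rw [← symmQuartic_eq, testIdeal_symmQuartic hp he]
  exact ⟨rfl, isPrime_mxI.radical⟩

/-- For a field `k` of characteristic `p > 2` and
`f = x²y² + y²z² + z²x² ∈ k[x, y, z]`, the test ideal `τ(f^{1−1/p})` equals `m = (x, y, z)`;
in particular `√τ(f^{1−1/p}) = m`, i.e. `R/fR` has an isolated non-F-pure point at `m`. -/
theorem testIdeal_example_eq_maxIdeal {k : Type*} [Field k] {p : ℕ}
    [Fact p.Prime] [CharP k p] (hp : 2 < p) :
    testIdeal p
        ((X 0) ^ 2 * (X 1) ^ 2 + (X 1) ^ 2 * (X 2) ^ 2 + (X 2) ^ 2 * (X 0) ^ 2 :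
          MvPolynomial (Fin (2 + 1)) k) 1 = mxI k 2 ∧
      (testIdeal p
          ((X 0) ^ 2 * (X 1) ^ 2 + (X 1) ^ 2 * (X 2) ^ 2 + (X 2) ^ 2 * (X 0) ^ 2 :
            MvPolynomial (Fin (2 + 1)) k) 1).radical = mxI k 2 :=
  testIdeal_example_eq_maxIdeal_general hp one_ne_zero

end
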